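/- arXiv:2311.13383 — 2 statements merged into one kernel-verified Lean document; each statement's English description precedes it below -/
import Mathlib

section
/- Let k ≥ 1 and let S_Q, S_1*, …, S_k*, T_1, …, T_k be finite sets over a common universe. Define C_0 = S_Q and C_i = C_{i−1} ∪ T_i for 1 ≤ i ≤ k, and write OPT = S_Q ∪ S_1* ∪ ⋯ ∪ S_k*. Suppose that for every i ∈ {1, …, k}, k·|T_i \ C_{i−1}| ≥ Σ_{j=1}^{k} |S_j* \ C_{i−1}|. Then for every i ∈ {1, …, k}, |C_i| ≥ (|OPT|/k)·Σ_{j=0}^{i−1} (1 − 1/k)^j + (1 − 1/k)^i·|S_Q|. -/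
/-!
Write `c i = |C i|`. Since `S_Q ⊆ C i`, the optimal union is covered by `C i` together with the
sets `Sstar j \ C i`, so `|OPT| ≤ c i + ∑ j, |Sstar j \ C i| ≤ c i + k * |T i \ C i|` by the gain
hypothesis. As `c (i + 1) = c i + |T i \ C i|`, this is the recurrence
`|OPT| / k + (1 - 1 / k) * c i ≤ c (i + 1)`. The claimed lower bound satisfies it with equality
and agrees with `c 0 = |S_Q|` at `i = 0`, so the result follows by induction from `i = 0`.
-/

/-- Any set `C ⊇ S` misses at most `∑ j, |A j \ C|` elements of `S ∪ ⋃ j, A j`. -/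
lemma card_union_biUnion_le {α : Type*} [DecidableEq α] {k : ℕ} (S C : Finset α)
    (A : Fin k → Finset α) (h : S ⊆ C) :
    (S ∪ Finset.univ.biUnion A).card ≤ C.card + ∑ j, (A j \ C).card := by
  have hsub : S ∪ Finset.univ.biUnion A ⊆ C ∪ Finset.univ.biUnion (fun j => A j \ C) := by
    intro x hx
    by_cases hxC : x ∈ C
    · exact Finset.mem_union_left _ hxC
    · have hxS : x ∉ S := fun hxS => hxC (h hxS)
      simpa [hxC, hxS] using hx
  calc (S ∪ Finset.univ.biUnion A).card
      ≤ (C ∪ Finset.univ.biUnion (fun j => A j \ C)).card := Finset.card_le_card hsub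
    _ ≤ C.card + (Finset.univ.biUnion (fun j => A j \ C)).card := Finset.card_union_le _ _
    _ ≤ C.card + ∑ j, (A j \ C).card := by gcongr; exact Finset.card_biUnion_le

/-- Lemma 7: under the per-iteration gain hypothesis, for every `1 ≤ i ≤ k`,
`|C_i| ≥ (|OPT|/k)·Σ_{j=0}^{i−1}(1 − 1/k)^j + (1 − 1/k)^i·|S_Q|`. -/
theorem stmt_7 {α : Type*} [DecidableEq α] (k : ℕ) (hk : 1 ≤ k)
    (S_Q : Finset α) (Sstar T : Fin k → Finset α)
    (C : ℕ → Finset α) (hC0 : C 0 = S_Q)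
    (hCsucc : ∀ i : Fin k, C ((i : ℕ) + 1) = C (i : ℕ) ∪ T i)
    (hgain : ∀ i : Fin k,
      (∑ j, (Sstar j \ C (i : ℕ)).card) ≤ k * (T i \ C (i : ℕ)).card) :
    ∀ i : ℕ, 1 ≤ i → i ≤ k →
      ((S_Q ∪ Finset.univ.biUnion Sstar).card : ℝ) / k *
          (∑ j ∈ Finset.range i, (1 - 1 / (k : ℝ)) ^ j) +
        (1 - 1 / (k : ℝ)) ^ i * (S_Q.card : ℝ) ≤ ((C i).card : ℝ) := by
  have hk0 : (0 : ℝ) < k := by exact_mod_cast hk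
  have hkinv : (1 : ℝ) / k ≤ 1 := (div_le_one hk0).2 (by exact_mod_cast hk)
  have hsub : ∀ i, i ≤ k → S_Q ⊆ C i := by
    intro i
    induction i with
    | zero => intro _; rw [hC0]
    | succ n ih =>
      intro hn
      rw [hCsucc ⟨n, hn⟩]
      exact (ih (by omega)).trans Finset.subset_union_left
  set O : ℝ := ((S_Q ∪ Finset.univ.biUnion Sstar).card : ℝ) with hO
  have hrec : ∀ n, n + 1 ≤ k →
      O / k + (1 - 1 / (k : ℝ)) * ((C n).card : ℝ) ≤ ((C (n + 1)).card : ℝ) := by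
    intro n hn
    have hcover : O ≤ (C n).card + k * ((T ⟨n, hn⟩ \ C n).card : ℝ) := by
      have h := (card_union_biUnion_le S_Q (C n) Sstar (hsub n (by omega))).trans
        (Nat.add_le_add_left (hgain ⟨n, hn⟩) _)
      rw [hO]
      exact_mod_cast h
    have hcard : ((C (n + 1)).card : ℝ) = (C n).card + ((T ⟨n, hn⟩ \ C n).card : ℝ) := by
      have h : (C (n + 1)).card = (C n).card + (T ⟨n, hn⟩ \ C n).card := by
        rw [hCsucc ⟨n, hn⟩, ← Finset.union_sdiff_self_eq_union,
          Finset.card_union_of_disjoint Finset.disjoint_sdiff]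
      exact_mod_cast h
    have hdiv : (O - (C n).card) / k ≤ ((T ⟨n, hn⟩ \ C n).card : ℝ) := by
      rw [div_le_iff₀ hk0]
      linarith
    have hsplit : O / k + (1 - 1 / (k : ℝ)) * ((C n).card : ℝ)
        = (C n).card + (O - (C n).card) / k := by ring
    linarith
  intro i hi
  -- The hypothesis `1 ≤ i` is discarded so that the induction can start at `i = 0`.
  clear hi
  induction i with
  | zero => intro _; simp [hC0]
  | succ n ih =>
    intro hn
    refine le_trans (le_of_eq ?_) ((add_le_add_right
      (mul_le_mul_of_nonneg_left (ih (by omega)) (sub_nonneg.2 hkinv)) _).trans (hrec n hn))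
    rw [geom_sum_succ, pow_succ]
    ring
end

section
/- Let k ≥ 1 be an integer and let c : ℕ → ℝ be a sequence satisfying c_{i+1} ≥ c_i + (M − c_i)/k for all i with 0 ≤ i < k, where M is a real number. Then c_k ≥ M·(1 − (1 − 1/k)^k) + (1 − 1/k)^k·c_0. -/
/-! Writing `q = 1 - 1/k ≥ 0`, the recurrence is equivalent to `M - c (i + 1) ≤ q * (M - c i)`.
Iterating it `k` times gives `M - c k ≤ q ^ k * (M - c 0)`, which rearranges to the claimed
bound. -/

/-- Numerical core of Lemmas 6–7 and Theorem 1: if `c_{i+1} ≥ c_i + (M − c_i)/k` for all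
`0 ≤ i < k`, then `c_k ≥ M·(1 − (1 − 1/k)^k) + (1 − 1/k)^k·c_0`. -/
theorem stmt_11 (k : ℕ) (hk : 1 ≤ k) (M : ℝ) (c : ℕ → ℝ)
    (h : ∀ i < k, c i + (M - c i) / (k : ℝ) ≤ c (i + 1)) :
    M * (1 - (1 - 1 / (k : ℝ)) ^ k) + (1 - 1 / (k : ℝ)) ^ k * c 0 ≤ c k := by
  have hk' : (1 : ℝ) ≤ k := by exact_mod_cast hk
  have hq : 0 ≤ 1 - 1 / (k : ℝ) := by
    rw [sub_nonneg, div_le_one (by linarith)]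
    exact hk'
  -- The recurrence says that the gap `M - c i` shrinks by a factor `1 - 1/k` at each step.
  have key : ∀ i ≤ k, M - c i ≤ (1 - 1 / (k : ℝ)) ^ i * (M - c 0) := by
    intro i
    induction i with
    | zero => simp
    | succ n ih =>
      intro hn
      calc M - c (n + 1) ≤ M - (c n + (M - c n) / k) := sub_le_sub_left (h n hn) M
        _ = (1 - 1 / (k : ℝ)) * (M - c n) := by ring
        _ ≤ (1 - 1 / (k : ℝ)) * ((1 - 1 / (k : ℝ)) ^ n * (M - c 0)) :=
          mul_le_mul_of_nonneg_left (ih (by omega)) hq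
        _ = (1 - 1 / (k : ℝ)) ^ (n + 1) * (M - c 0) := by ring
  linarith [key k le_rfl]
end
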